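/- Let β ∈ ℂ be an algebraic number of degree d with |β| > 1, and suppose that |β'| ≠ 1 for every Galois conjugate β' of β. Then there exists a finite alphabet A ⊂ ℤ such that ℚ(β) = Per_A(β), i.e. every element of the field ℚ(β) admits an eventually periodic (β, A)-representation, and conversely every complex number admitting an eventually periodic (β, A)-representation lies in ℚ(β). -/

import Mathlib

/-!
Put `t = β⁻¹`. For large `n` every conjugate of `tⁿ` is either tiny or huge, so one coefficient of
its minimal polynomial dominates the sum of all the others; replacing `X` by `Xⁿ` gives an integer
polynomial `g` with a dominant coefficient and `g(t) = 0`. Carrying with the relation `g(t) = 0`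
contracts large digits and preserves eventual periodicity, so every eventually periodic digit
sequence can be brought into an alphabet depending only on `g`.

Each `x ∈ ℚ(β)` has some eventually periodic integer digit sequence: if `q x ∈ ℤ[t]` with `q` a
nonzero integer, then `q` divides some `tⁱ (1 - tⁿ)` in `ℤ[t]`, so that `tⁱ x = P(t) / (1 - tⁿ)`
with `P ∈ ℤ[X]`, and `P / (1 - Xⁿ)` is a power series with eventually periodic coefficients.
-/

open Polynomial Filter Topology
open scoped PowerSeries

/-! ### Polynomials with a dominant coefficient -/

section L1Norm

variable {R S : Type*}

/-- The `ℓ¹` norm of a polynomial, the sum of the norms of its coefficients. -/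
noncomputable def l1Norm [SeminormedRing R] (p : R[X]) : ℝ :=
  p.sum fun _ a ↦ ‖a‖

section SeminormedRing

variable [SeminormedRing R] (p q : R[X])

theorem l1Norm_eq_sum_of_support_subset {s : Finset ℕ} (hs : p.support ⊆ s) :
    l1Norm p = ∑ i ∈ s, ‖p.coeff i‖ :=
  sum_eq_of_subset _ (fun _ ↦ norm_zero) hs

theorem sum_norm_coeff_le_l1Norm (s : Finset ℕ) : ∑ i ∈ s, ‖p.coeff i‖ ≤ l1Norm p := by
  rw [l1Norm_eq_sum_of_support_subset p (s := s ∪ p.support) Finset.subset_union_right]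
  exact Finset.sum_le_sum_of_subset_of_nonneg Finset.subset_union_left fun _ _ _ ↦ norm_nonneg _

theorem norm_coeff_le_l1Norm (i : ℕ) : ‖p.coeff i‖ ≤ l1Norm p := by
  simpa using sum_norm_coeff_le_l1Norm p {i}

theorem l1Norm_nonneg : 0 ≤ l1Norm p :=
  (norm_nonneg _).trans (norm_coeff_le_l1Norm p 0)

theorem l1Norm_add_le : l1Norm (p + q) ≤ l1Norm p + l1Norm q := by
  rw [l1Norm_eq_sum_of_support_subset (p + q) support_add]
  calc ∑ i ∈ p.support ∪ q.support, ‖(p + q).coeff i‖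
    _ ≤ ∑ i ∈ p.support ∪ q.support, (‖p.coeff i‖ + ‖q.coeff i‖) :=
        Finset.sum_le_sum fun i _ ↦ coeff_add p q i ▸ norm_add_le _ _
    _ ≤ l1Norm p + l1Norm q := by
        rw [Finset.sum_add_distrib]
        gcongr <;> exact sum_norm_coeff_le_l1Norm _ _

theorem l1Norm_monomial (n : ℕ) (a : R) : l1Norm (monomial n a) = ‖a‖ :=
  sum_monomial_index a _ norm_zero

theorem l1Norm_erase_add_norm_coeff (n : ℕ) : l1Norm (p.erase n) + ‖p.coeff n‖ = l1Norm p := by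
  rw [l1Norm_eq_sum_of_support_subset p (Finset.subset_insert n _),
    ← Finset.sum_erase_add _ _ (Finset.mem_insert_self n _), Finset.erase_insert_eq_erase,
    l1Norm, sum_def, support_erase]
  congr 1
  exact Finset.sum_congr rfl fun i hi ↦ by rw [erase_ne _ (Finset.ne_of_mem_erase hi)]

theorem l1Norm_X_mul : l1Norm (X * p) = l1Norm p := by
  rw [l1Norm_eq_sum_of_support_subset (X * p) (s := p.support.map (addRightEmbedding 1)),
    Finset.sum_map]
  · simp only [addRightEmbedding_apply, coeff_X_mul, l1Norm, sum_def]
  · rintro (_ | i) hi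
    · simp at hi
    · simpa using hi

theorem l1Norm_map [SeminormedRing S] {f : R →+* S} (hf : ∀ a, ‖f a‖ = ‖a‖) :
    l1Norm (p.map f) = l1Norm p := by
  rw [l1Norm_eq_sum_of_support_subset (p.map f) (support_map_subset f p), l1Norm, sum_def]
  simp only [coeff_map, hf]

theorem l1Norm_smul [NormMulClass R] (c : R) : l1Norm (c • p) = ‖c‖ * l1Norm p := by
  rw [l1Norm_eq_sum_of_support_subset (c • p) (support_smul c p), l1Norm, sum_def, Finset.mul_sum]
  simp only [coeff_smul, smul_eq_mul, norm_mul]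

end SeminormedRing

theorem l1Norm_expand [SeminormedCommRing R] (p : R[X]) {n : ℕ} (hn : 0 < n) :
    l1Norm (expand R n p) = l1Norm p := by
  rw [l1Norm_eq_sum_of_support_subset (expand R n p) (s := p.support.image (· * n)),
    Finset.sum_image fun i _ j _ ↦ Nat.eq_of_mul_eq_mul_right hn]
  · simp only [coeff_expand_mul hn, l1Norm, sum_def]
  · intro i hi
    rw [mem_support_iff, coeff_expand hn, ite_ne_right_iff] at hi
    exact Finset.mem_image.2 ⟨i / n, mem_support_iff.2 hi.2, Nat.div_mul_cancel hi.1⟩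

end L1Norm

section DominantCoeff

variable {R S : Type*}

/-- The `N`-th coefficient of `p` dominates: its norm exceeds the sum of the norms of all the
others, that is, half of the `ℓ¹` norm of `p`. -/
def IsDominantCoeff [SeminormedRing R] (p : R[X]) (N : ℕ) : Prop :=
  l1Norm p < 2 * ‖p.coeff N‖

theorem IsDominantCoeff.l1Norm_erase_lt [SeminormedRing R] {p : R[X]} {N : ℕ}
    (h : IsDominantCoeff p N) : l1Norm (p.erase N) < ‖p.coeff N‖ := by
  unfold IsDominantCoeff at h
  linarith [l1Norm_erase_add_norm_coeff p N]

theorem isDominantCoeff_of_l1Norm_sub_monomial_lt [SeminormedRing R] {p : R[X]} {N : ℕ} {c : R}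
    (h : l1Norm (p - monomial N c) < ‖c‖ / 3) : IsDominantCoeff p N := by
  set r := p - monomial N c with hr
  have hp : p = r + monomial N c := by rw [hr, sub_add_cancel]
  have hnorm : l1Norm p ≤ l1Norm r + ‖c‖ := by
    simpa only [← hp, l1Norm_monomial] using l1Norm_add_le r (monomial N c)
  have hcoeff : ‖c‖ ≤ ‖p.coeff N‖ + ‖r.coeff N‖ := by
    simpa [hr] using norm_sub_le (p.coeff N) (r.coeff N)
  unfold IsDominantCoeff
  linarith [norm_coeff_le_l1Norm r N]

theorem isDominantCoeff_map_iff [SeminormedRing R] [SeminormedRing S] {f : R →+* S}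
    (hf : ∀ a, ‖f a‖ = ‖a‖) {p : R[X]} {N : ℕ} :
    IsDominantCoeff (p.map f) N ↔ IsDominantCoeff p N := by
  simp only [IsDominantCoeff, l1Norm_map p hf, coeff_map, hf]

theorem IsDominantCoeff.smul [NormedRing R] [NormMulClass R] {p : R[X]} {N : ℕ}
    (h : IsDominantCoeff p N) {c : R} (hc : c ≠ 0) : IsDominantCoeff (c • p) N := by
  simp only [IsDominantCoeff, l1Norm_smul, coeff_smul, smul_eq_mul, norm_mul]
  rw [mul_left_comm]
  exact mul_lt_mul_of_pos_left h (norm_pos_iff.2 hc)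

theorem IsDominantCoeff.expand [SeminormedCommRing R] {p : R[X]} {N n : ℕ}
    (h : IsDominantCoeff p N) (hn : 0 < n) : IsDominantCoeff (expand R n p) (N * n) := by
  simpa only [IsDominantCoeff, l1Norm_expand p hn, coeff_expand_mul hn] using h

theorem IsDominantCoeff.exists_int {p : ℚ[X]} {N : ℕ} (h : IsDominantCoeff p N) :
    ∃ g : ℤ[X], IsDominantCoeff g N ∧
      ∀ {A : Type*} [CommRing A] [Algebra ℚ A] {x : A}, aeval x p = 0 → aeval x g = 0 := by
  obtain ⟨b, hb, hbp⟩ := IsLocalization.integerNormalization_spec (nonZeroDivisors ℤ) p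
  refine ⟨IsLocalization.integerNormalization (nonZeroDivisors ℤ) p, ?_, fun hx ↦
    IsLocalization.integerNormalization_aeval_eq_zero _ p hx⟩
  rw [← isDominantCoeff_map_iff (f := algebraMap ℤ ℚ) (by simp), hbp,
    ← Int.cast_smul_eq_zsmul ℚ]
  exact h.smul (Int.cast_ne_zero.2 (nonZeroDivisors.ne_zero hb))

theorem l1Norm_X_sub_C_mul_sub_monomial_succ_le [NormedCommRing R] [NormMulClass R] (p : R[X])
    (z c : R) (N : ℕ) : l1Norm ((X - C z) * p - monomial (N + 1) c) ≤
      l1Norm (p - monomial N c) + ‖z‖ * l1Norm p := by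
  have hsplit : (X - C z) * p - monomial (N + 1) c = X * (p - monomial N c) + (-z) • p := by
    rw [smul_eq_C_mul, C_neg, mul_sub, X_mul_monomial]; ring
  rw [hsplit, ← l1Norm_X_mul (p - _), ← norm_neg z, ← l1Norm_smul]
  exact l1Norm_add_le _ _

theorem l1Norm_X_sub_C_mul_sub_monomial_le [NormedCommRing R] [NormMulClass R] (p : R[X])
    (z c : R) (N : ℕ) : l1Norm ((X - C z) * p - monomial N (-z * c)) ≤
      l1Norm p + ‖z‖ * l1Norm (p - monomial N c) := by
  have hsplit : (X - C z) * p - monomial N (-z * c) = X * p + (-z) • (p - monomial N c) := by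
    rw [smul_sub, smul_monomial, smul_eq_mul, smul_eq_C_mul, C_neg]; ring
  rw [hsplit, ← l1Norm_X_mul p, ← norm_neg z, ← l1Norm_smul]
  exact l1Norm_add_le _ _

/-- Multiplying by `X - z` shifts the dominant monomial if `z` is small, and rescales it by `-z`
if `z` is large. -/
theorem exists_l1Norm_prod_X_sub_C_sub_monomial_le {K : Type*} [NormedField K] {ε : ℝ}
    (hε : 0 < ε) (s : Multiset K) (hs : ∀ z ∈ s, ‖z‖ ≤ ε ∨ ε⁻¹ ≤ ‖z‖) :
    ∃ (N : ℕ) (c : K), c ≠ 0 ∧ l1Norm ((s.map (X - C ·)).prod - monomial N c) ≤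
      ((1 + ε) ^ s.card - 1) * ‖c‖ := by
  induction s using Multiset.induction_on with
  | empty => exact ⟨0, 1, one_ne_zero, by simp [l1Norm]⟩
  | cons z s ih =>
    obtain ⟨N, c, hc, hr⟩ := ih fun w hw ↦ hs w (Multiset.mem_cons_of_mem hw)
    rw [Multiset.map_cons, Multiset.prod_cons, Multiset.card_cons, pow_succ]
    set P := (s.map (X - C ·)).prod
    set δ := (1 + ε) ^ s.card
    have hP : l1Norm P ≤ δ * ‖c‖ := by
      have := l1Norm_add_le (P - monomial N c) (monomial N c)
      rw [sub_add_cancel, l1Norm_monomial] at this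
      linarith
    rcases hs z (Multiset.mem_cons_self z s) with hz | hz
    · refine ⟨N + 1, c, hc, (l1Norm_X_sub_C_mul_sub_monomial_succ_le P z c N).trans ?_⟩
      calc l1Norm (P - monomial N c) + ‖z‖ * l1Norm P
        _ ≤ (δ - 1) * ‖c‖ + ε * (δ * ‖c‖) := by
            gcongr
            exact l1Norm_nonneg P
        _ = (δ * (1 + ε) - 1) * ‖c‖ := by ring
    · have hz0 : 0 < ‖z‖ := (inv_pos.2 hε).trans_le hz
      have hεz : 1 ≤ ε * ‖z‖ := (inv_le_iff_one_le_mul₀' hε).1 hz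
      refine ⟨N, -z * c, mul_ne_zero (neg_ne_zero.2 (norm_pos_iff.1 hz0)) hc,
        (l1Norm_X_sub_C_mul_sub_monomial_le P z c N).trans ?_⟩
      calc l1Norm P + ‖z‖ * l1Norm (P - monomial N c)
        _ ≤ 1 * (δ * ‖c‖) + ‖z‖ * ((δ - 1) * ‖c‖) := by
            rw [one_mul]
            gcongr
        _ ≤ ε * ‖z‖ * (δ * ‖c‖) + ‖z‖ * ((δ - 1) * ‖c‖) := by gcongr
        _ = (δ * (1 + ε) - 1) * ‖-z * c‖ := by rw [norm_mul, norm_neg]; ring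

theorem exists_isDominantCoeff_of_splits {K : Type*} [NormedField K] {p : K[X]}
    (hp : p.Splits) (hmonic : p.Monic) {ε : ℝ} (hε : 0 < ε)
    (hdeg : (1 + ε) ^ p.natDegree < 4 / 3) (hroots : ∀ z ∈ p.roots, ‖z‖ ≤ ε ∨ ε⁻¹ ≤ ‖z‖) :
    ∃ N, IsDominantCoeff p N := by
  obtain ⟨N, c, hc, h⟩ := exists_l1Norm_prod_X_sub_C_sub_monomial_le hε p.roots hroots
  rw [← hp.eq_prod_roots_of_monic hmonic, ← hp.natDegree_eq_card_roots] at h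
  refine ⟨N, isDominantCoeff_of_l1Norm_sub_monomial_lt (h.trans_lt ?_)⟩
  rw [div_eq_inv_mul]
  exact mul_lt_mul_of_pos_right (by linarith) (norm_pos_iff.2 hc)

end DominantCoeff

section Conjugates

variable {F : Type*} [Field F] [NumberField F] {x : F}

theorem exists_pow_embedding_small_or_large (h : ∀ φ : F →+* ℂ, ‖φ x‖ ≠ 1) {ε : ℝ} (hε : 0 < ε) :
    ∃ n, 0 < n ∧ ∀ φ : F →+* ℂ, ‖φ (x ^ n)‖ ≤ ε ∨ ε⁻¹ ≤ ‖φ (x ^ n)‖ := by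
  have hev : ∀ φ : F →+* ℂ, ∀ᶠ n in atTop, ‖φ (x ^ n)‖ ≤ ε ∨ ε⁻¹ ≤ ‖φ (x ^ n)‖ := fun φ ↦ by
    simp only [map_pow, norm_pow]
    rcases (h φ).lt_or_gt with hlt | hgt
    · exact ((tendsto_pow_atTop_nhds_zero_of_lt_one (norm_nonneg _) hlt).eventually_le_const
        hε).mono fun _ ↦ Or.inl
    · exact ((tendsto_pow_atTop_atTop_of_one_lt hgt).eventually_ge_atTop _).mono fun _ ↦ Or.inr
  exact ((eventually_gt_atTop 0).and (eventually_all.2 hev)).exists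

theorem exists_pos_one_add_pow_lt (d : ℕ) {r : ℝ} (hr : 1 < r) : ∃ ε > 0, (1 + ε) ^ d < r := by
  have hcont : Tendsto (fun ε : ℝ ↦ (1 + ε) ^ d) (𝓝 0) (𝓝 1) :=
    Continuous.tendsto' (by fun_prop) _ _ (by simp)
  exact (((hcont.mono_left nhdsWithin_le_nhds).eventually_lt_const hr).and
    (self_mem_nhdsWithin (s := Set.Ioi 0))).exists.imp fun _ hε ↦ ⟨hε.2, hε.1⟩

theorem exists_isDominantCoeff_aeval_eq_zero (h : ∀ φ : F →+* ℂ, ‖φ x‖ ≠ 1) :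
    ∃ (g : ℤ[X]) (N : ℕ), IsDominantCoeff g N ∧ aeval x g = 0 := by
  obtain ⟨ε, hε, hdeg⟩ := exists_pos_one_add_pow_lt (Module.finrank ℚ F)
    (r := 4 / 3) (by norm_num)
  obtain ⟨n, hn, hsplit⟩ := exists_pow_embedding_small_or_large h hε
  have hint : IsIntegral ℚ (x ^ n) := Algebra.IsIntegral.isIntegral _
  have hroots : ∀ z ∈ ((minpoly ℚ (x ^ n)).map (algebraMap ℚ ℂ)).roots, ‖z‖ ≤ ε ∨ ε⁻¹ ≤ ‖z‖ := by
    intro z hz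
    have hz' : z ∈ (minpoly ℚ (x ^ n)).rootSet ℂ := by
      simpa [rootSet, aroots] using hz
    rw [← NumberField.Embeddings.range_eval_eq_rootSet_minpoly F ℂ] at hz'
    obtain ⟨φ, rfl⟩ := hz'
    exact hsplit φ
  obtain ⟨N, hN⟩ := exists_isDominantCoeff_of_splits (IsAlgClosed.splits _)
    ((minpoly.monic hint).map _) hε (by
      rw [natDegree_map]
      exact (pow_le_pow_right₀ (by linarith) (minpoly.natDegree_le _)).trans_lt hdeg) hroots
  rw [isDominantCoeff_map_iff (norm_algebraMap' ℂ)] at hN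
  obtain ⟨g, hg, hroot⟩ := hN.exists_int
  refine ⟨expand ℤ n g, N * n, hg.expand hn, ?_⟩
  rw [expand_aeval]
  exact hroot (minpoly.aeval ℚ _)

end Conjugates

theorem exists_isDominantCoeff_aeval_inv_eq_zero {K : Type*} [Field K] [CharZero K] {β : K}
    (hβ : IsAlgebraic ℚ β) (hconj : ∀ z : ℂ, aeval z (minpoly ℚ β) = 0 → ‖z‖ ≠ 1) :
    ∃ (g : ℤ[X]) (N : ℕ), IsDominantCoeff g N ∧ aeval β⁻¹ g = 0 := by
  have := IntermediateField.adjoin.finiteDimensional hβ.isIntegral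
  have : NumberField (IntermediateField.adjoin ℚ {β}) := ⟨⟩
  set γ := IntermediateField.AdjoinSimple.gen ℚ β
  obtain ⟨g, N, hg, hroot⟩ := exists_isDominantCoeff_aeval_eq_zero (x := γ⁻¹) fun φ ↦ by
    have hφ : aeval (φ γ) (minpoly ℚ β) = 0 := by
      rw [← IntermediateField.minpoly_gen ℚ β]
      exact minpoly.aeval_algHom ℚ φ.toRatAlgHom γ
    rw [map_inv₀, norm_inv, inv_ne_one]
    exact hconj _ hφ
  refine ⟨g, N, hg, ?_⟩
  have := congrArg (algebraMap (IntermediateField.adjoin ℚ {β}) K) hroot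
  rwa [← aeval_algebraMap_apply, map_inv₀, map_zero] at this

/-! ### Denominators -/

section Divisibility

variable {R : Type*} [CommRing R] {u : R}

theorem exists_lt_dvd_X_pow_sub_X_pow {k : Type*} [Field k] [Finite k] {f : k[X]} (hf : f ≠ 0) :
    ∃ i j, i < j ∧ f ∣ X ^ j - X ^ i := by
  have := Module.Finite.of_basis (AdjoinRoot.powerBasis hf).basis
  have := Module.finite_of_finite k (M := AdjoinRoot f)
  obtain ⟨i, j, hne, heq⟩ := Finite.exists_ne_map_eq_of_infinite (AdjoinRoot.root f ^ · : ℕ → _)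
  wlog hij : i < j generalizing i j
  · exact this j i hne.symm heq.symm (hne.lt_or_gt.resolve_left hij)
  refine ⟨i, j, hij, AdjoinRoot.mk_eq_zero.1 ?_⟩
  simpa [sub_eq_zero] using heq.symm

theorem exists_prime_dvd_pow_mul_pow_sub_one {f : ℤ[X]} (hf : f.IsPrimitive) (hu : aeval u f = 0)
    {p : ℕ} (hp : p.Prime) : ∃ i n, 0 < n ∧ (p : R) ∣ u ^ i * (u ^ n - 1) := by
  have := Fact.mk hp
  set π := Int.castRingHom (ZMod p)
  have hπ (g : ℤ[X]) : g.map π = 0 ↔ C (p : ℤ) ∣ g := by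
    simp only [C_dvd_iff_dvd_coeff, Polynomial.ext_iff, coeff_map, coeff_zero, π,
      Int.coe_castRingHom, ZMod.intCast_zmod_eq_zero_iff_dvd]
  have hf0 : f.map π ≠ 0 := fun h ↦ hp.one_lt.ne' <| by
    simpa using Int.natAbs_of_isUnit (hf _ ((hπ f).1 h))
  obtain ⟨i, j, hij, w, hw⟩ := exists_lt_dvd_X_pow_sub_X_pow hf0
  obtain ⟨v, rfl⟩ := Polynomial.map_surjective π (ZMod.ringHom_surjective π) w
  obtain ⟨r, hr⟩ := (hπ (X ^ j - X ^ i - f * v)).1 (by simp [hw])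
  refine ⟨i, j - i, Nat.sub_pos_of_lt hij, aeval u r, ?_⟩
  rw [mul_sub, ← pow_add, Nat.add_sub_cancel' hij.le, mul_one]
  simpa [hu] using congrArg (aeval u) hr

theorem natCast_mul_dvd_pow_mul_pow_sub_one {a : R} {b i j m n : ℕ}
    (ha : a ∣ u ^ i * (u ^ m - 1)) (hb : (b : R) ∣ u ^ j * (u ^ n - 1)) :
    a * b ∣ u ^ (i + j) * (u ^ (m * n * b) - 1) := by
  set y := u ^ (m * n) with hy
  have ha' : a ∣ u ^ i * (y - 1) :=
    ha.trans (mul_dvd_mul_left _ (by rw [hy, pow_mul]; exact sub_one_dvd_pow_sub_one ..))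
  have hb' : (b : R) ∣ u ^ j * (y - 1) :=
    hb.trans (mul_dvd_mul_left _ (by rw [hy, pow_mul']; exact sub_one_dvd_pow_sub_one ..))
  -- `y ^ b - 1 = (y - 1) * ∑ y ^ l`, and the sum is congruent to `b`, hence to `0`, modulo `b`.
  have hsum : (b : R) ∣ u ^ j * ∑ l ∈ Finset.range b, y ^ l := by
    have : ∑ l ∈ Finset.range b, y ^ l = ∑ l ∈ Finset.range b, (y ^ l - 1) + b := by simp
    rw [this, mul_add, Finset.mul_sum]
    refine dvd_add (Finset.dvd_sum fun l _ ↦ hb'.trans (mul_dvd_mul_left _ ?_)) (dvd_mul_left _ _)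
    exact sub_one_dvd_pow_sub_one ..
  convert mul_dvd_mul ha' hsum using 1
  rw [pow_mul, ← mul_geom_sum, pow_add]
  ring

theorem exists_natCast_dvd_pow_mul_pow_sub_one {f : ℤ[X]} (hf : f.IsPrimitive)
    (hu : aeval u f = 0) {q : ℕ} (hq : q ≠ 0) :
    ∃ i n, 0 < n ∧ (q : R) ∣ u ^ i * (u ^ n - 1) := by
  induction q using induction_on_primes with
  | zero => exact absurd rfl hq
  | one => exact ⟨0, 1, one_pos, by simp⟩
  | prime_mul p q hp ih =>
    obtain ⟨i, m, hm, hpdvd⟩ := exists_prime_dvd_pow_mul_pow_sub_one hf hu hp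
    obtain ⟨j, n, hn, hqdvd⟩ := ih (right_ne_zero_of_mul hq)
    refine ⟨i + j, m * n * q, ?_, ?_⟩
    · exact Nat.mul_pos (Nat.mul_pos hm hn) (Nat.pos_of_ne_zero (right_ne_zero_of_mul hq))
    · simpa only [Nat.cast_mul] using natCast_mul_dvd_pow_mul_pow_sub_one hpdvd hqdvd

end Divisibility

section Fractions

variable {K : Type*} [Field K] [CharZero K] {t x : K}

theorem exists_isPrimitive_aeval_eq_zero (ht : IsAlgebraic ℚ t) :
    ∃ f : ℤ[X], f.IsPrimitive ∧ aeval t f = 0 := by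
  obtain ⟨f, hf0, hf⟩ := (IsFractionRing.isAlgebraic_iff ℤ ℚ K).2 ht
  exact ⟨f.primPart, f.isPrimitive_primPart, aeval_primPart_eq_zero hf0 hf⟩

theorem exists_intCast_mul_eq_aeval (ht : IsAlgebraic ℚ t) (hx : x ∈ Subfield.closure {t}) :
    ∃ b : ℤ, b ≠ 0 ∧ ∃ g : ℤ[X], b * x = aeval t g := by
  have hx' : x ∈ (IntermediateField.adjoin ℚ {t}).toSubalgebra :=
    (Subfield.closure_le (t := (IntermediateField.adjoin ℚ {t}).toSubfield)).2
      (IntermediateField.subset_adjoin ℚ {t}) hx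
  rw [IntermediateField.adjoin_simple_toSubalgebra_of_isAlgebraic ht,
    Algebra.adjoin_singleton_eq_range_aeval] at hx'
  obtain ⟨p, rfl⟩ := hx'
  obtain ⟨b, hb, hbp⟩ := IsLocalization.integerNormalization_spec (nonZeroDivisors ℤ) p
  refine ⟨b, nonZeroDivisors.ne_zero hb,
    IsLocalization.integerNormalization (nonZeroDivisors ℤ) p, ?_⟩
  rw [← aeval_map_algebraMap ℚ, hbp, map_zsmul, zsmul_eq_mul]
  rfl

theorem exists_pow_mul_one_sub_pow_mul_eq_aeval (ht : IsAlgebraic ℚ t)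
    (hx : x ∈ Subfield.closure {t}) :
    ∃ i n, 0 < n ∧ ∃ P : ℤ[X], t ^ i * (1 - t ^ n) * x = aeval t P := by
  obtain ⟨f, hf, hft⟩ := exists_isPrimitive_aeval_eq_zero ht
  obtain ⟨b, hb, g, hg⟩ := exists_intCast_mul_eq_aeval ht hx
  let u : (aeval t : ℤ[X] →ₐ[ℤ] K).range := ⟨t, X, aeval_X t⟩
  have hu : aeval u f = 0 := Subtype.ext <| by
    simpa [u, hft] using (aeval_algebraMap_apply K u f).symm
  obtain ⟨i, n, hn, hdvd⟩ :=
    exists_natCast_dvd_pow_mul_pow_sub_one hf hu (Int.natAbs_ne_zero.2 hb)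
  have hb' : (b : (aeval t : ℤ[X] →ₐ[ℤ] K).range) ∣ (b.natAbs : ℕ) := by
    rw [← Int.cast_natCast]
    exact Int.cast_dvd_cast _ _ (Int.dvd_natAbs.2 dvd_rfl)
  obtain ⟨⟨_, s, rfl⟩, hs⟩ := hb'.trans hdvd
  refine ⟨i, n, hn, -(s * g), ?_⟩
  have hs' : t ^ i * (t ^ n - 1) = b * aeval t s := congrArg Subtype.val hs
  rw [map_neg, map_mul, ← hg]
  linear_combination -x * hs'

end Fractions

/-! ### Eventually periodic power series -/

section EventuallyPeriodic

/-- The sequence `a` is eventually periodic with (not necessarily minimal) period `p`. -/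
def EventuallyPeriodic {α : Type*} (p : ℕ) (a : ℕ → α) : Prop :=
  ∀ᶠ k in atTop, a (k + p) = a k

theorem EventuallyPeriodic.comp {α α' : Type*} {p : ℕ} {a : ℕ → α} (ha : EventuallyPeriodic p a)
    (f : α → α') : EventuallyPeriodic p fun k ↦ f (a k) :=
  ha.mono fun _ ↦ congrArg f

theorem EventuallyPeriodic.sub {G : Type*} [Sub G] {p : ℕ} {a b : ℕ → G}
    (ha : EventuallyPeriodic p a) (hb : EventuallyPeriodic p b) :
    EventuallyPeriodic p fun k ↦ a k - b k :=
  ha.mp (hb.mono fun _ hb ha ↦ congrArg₂ _ ha hb)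

/-- The power series `1 / (1 - X ^ p)`, with coefficient `1` at the multiples of `p`. -/
noncomputable def geomSeries (R : Type*) [CommRing R] (p : ℕ) (hp : p ≠ 0) : R⟦X⟧ :=
  PowerSeries.expand p hp (PowerSeries.mk 1)

variable {R : Type*} [CommRing R] {p : ℕ}

theorem geomSeries_mul_one_sub_X_pow (hp : p ≠ 0) :
    geomSeries R p hp * (1 - PowerSeries.X ^ p) = 1 := by
  simpa [geomSeries] using
    congrArg (PowerSeries.expand p hp) (PowerSeries.mk_one_mul_one_sub_eq_one R)

theorem coeff_add_one_sub_X_pow_mul (a : R⟦X⟧) (p k : ℕ) :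
    PowerSeries.coeff (k + p) ((1 - PowerSeries.X ^ p) * a) =
      PowerSeries.coeff (k + p) a - PowerSeries.coeff k a := by
  rw [sub_mul, one_mul, map_sub, PowerSeries.coeff_X_pow_mul]

theorem eventuallyPeriodic_coeff_iff (hp : p ≠ 0) {a : R⟦X⟧} :
    EventuallyPeriodic p (PowerSeries.coeff · a) ↔ ∃ P : R[X], a = P * geomSeries R p hp := by
  have hgeom := geomSeries_mul_one_sub_X_pow (R := R) hp
  constructor
  · intro ha
    obtain ⟨N, hN⟩ := eventually_atTop.1 ha
    refine ⟨PowerSeries.trunc (N + p) ((1 - PowerSeries.X ^ p) * a), ?_⟩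
    have htrunc : (PowerSeries.trunc (N + p) ((1 - PowerSeries.X ^ p) * a) : R⟦X⟧) =
        (1 - PowerSeries.X ^ p) * a := by
      ext k
      rw [coeff_coe, PowerSeries.coeff_trunc]
      split_ifs with hk
      · rfl
      · obtain ⟨m, rfl⟩ := Nat.exists_eq_add_of_le' ((Nat.le_add_left p N).trans (not_lt.1 hk))
        rw [coeff_add_one_sub_X_pow_mul, sub_eq_zero.2 (hN m (by omega))]
    rw [htrunc]
    linear_combination -a * hgeom
  · rintro ⟨P, rfl⟩
    filter_upwards [eventually_gt_atTop P.natDegree] with k hk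
    rw [← sub_eq_zero, ← coeff_add_one_sub_X_pow_mul, mul_left_comm, mul_comm (1 - _), hgeom,
      mul_one, coeff_coe, coeff_eq_zero_of_natDegree_lt (by omega)]

theorem EventuallyPeriodic.coeff_polynomial_mul (hp : p ≠ 0) {a : R⟦X⟧}
    (ha : EventuallyPeriodic p (PowerSeries.coeff · a)) (P : R[X]) :
    EventuallyPeriodic p (PowerSeries.coeff · ((P : R⟦X⟧) * a)) := by
  obtain ⟨Q, rfl⟩ := (eventuallyPeriodic_coeff_iff hp).1 ha
  exact (eventuallyPeriodic_coeff_iff hp).2 ⟨P * Q, by rw [coe_mul, mul_assoc]⟩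

end EventuallyPeriodic

section CoeffBound

variable {R : Type*}

theorem norm_coeff_polynomial_mul_le [SeminormedCommRing R] (P : R[X]) {a : R⟦X⟧} {M : ℝ}
    (ha : ∀ k, ‖PowerSeries.coeff k a‖ ≤ M) (k : ℕ) :
    ‖PowerSeries.coeff k ((P : R⟦X⟧) * a)‖ ≤ l1Norm P * M := by
  have hM : 0 ≤ M := (norm_nonneg _).trans (ha 0)
  rw [PowerSeries.coeff_mul, Finset.Nat.sum_antidiagonal_eq_sum_range_succ_mk]
  calc _ ≤ ∑ i ∈ Finset.range (k + 1), ‖P.coeff i‖ * M := by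
        refine norm_sum_le_of_le _ fun i _ ↦ (norm_mul_le _ _).trans ?_
        rw [coeff_coe]
        gcongr
        exact ha _
    _ ≤ l1Norm P * M := by
        rw [← Finset.sum_mul]
        gcongr
        exact sum_norm_coeff_le_l1Norm P _

theorem EventuallyPeriodic.exists_norm_coeff_le [SeminormedCommRing R] [NormOneClass R] {p : ℕ}
    (hp : p ≠ 0) {a : R⟦X⟧} (ha : EventuallyPeriodic p (PowerSeries.coeff · a)) :
    ∃ M : ℝ, ∀ k, ‖PowerSeries.coeff k a‖ ≤ M := by
  obtain ⟨P, rfl⟩ := (eventuallyPeriodic_coeff_iff hp).1 ha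
  refine ⟨l1Norm P * 1, norm_coeff_polynomial_mul_le P fun k ↦ ?_⟩
  rw [geomSeries, PowerSeries.coeff_expand]
  split_ifs <;> simp

end CoeffBound

section HasValue

variable {K : Type*} [NormedField K]

/-- The integer power series `a` converges at `t`, with sum `y`. -/
def HasValue (a : ℤ⟦X⟧) (t y : K) : Prop :=
  HasSum (fun k ↦ ((PowerSeries.coeff k a : ℤ) : K) * t ^ k) y

namespace HasValue

variable {a b : ℤ⟦X⟧} {t y z : K}

theorem add (ha : HasValue a t y) (hb : HasValue b t z) : HasValue (a + b) t (y + z) := by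
  simpa only [HasValue, map_add, Int.cast_add, add_mul] using HasSum.add ha hb

theorem sub (ha : HasValue a t y) (hb : HasValue b t z) : HasValue (a - b) t (y - z) := by
  simpa only [HasValue, map_sub, Int.cast_sub, sub_mul] using HasSum.sub ha hb

theorem C_mul (ha : HasValue a t y) (c : ℤ) : HasValue (PowerSeries.C c * a) t (c * y) := by
  simpa only [HasValue, PowerSeries.coeff_C_mul, Int.cast_mul, mul_assoc] using
    HasSum.mul_left (c : K) ha

theorem X_mul (ha : HasValue a t y) : HasValue (PowerSeries.X * a) t (t * y) := by
  rw [HasValue, ← hasSum_nat_add_iff' 1]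
  simpa [PowerSeries.coeff_succ_X_mul, pow_succ', mul_left_comm] using HasSum.mul_left t ha

theorem polynomial_mul (ha : HasValue a t y) (P : ℤ[X]) :
    HasValue ((P : ℤ⟦X⟧) * a) t (aeval t P * y) := by
  induction P using Polynomial.induction_on with
  | C c =>
    simpa only [coe_C, aeval_C, algebraMap_int_eq, Int.coe_castRingHom] using ha.C_mul c
  | add P Q hP hQ => simpa only [coe_add, map_add, add_mul] using hP.add hQ
  | monomial n c ih =>
    rw [pow_succ', mul_left_comm, coe_mul, coe_X, map_mul, aeval_X, mul_assoc, mul_assoc]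
    exact ih.X_mul

theorem expand {p : ℕ} (hp : p ≠ 0) (ha : HasValue a (t ^ p) y) :
    HasValue (PowerSeries.expand p hp a) t y := by
  rw [HasValue, ← (mul_right_injective₀ hp).hasSum_iff]
  · simpa only [HasValue, Function.comp_def, PowerSeries.coeff_expand_mul, pow_mul] using ha
  · intro k hk
    rw [PowerSeries.coeff_expand_of_not_dvd p hp, Int.cast_zero, zero_mul]
    rintro ⟨m, rfl⟩
    exact hk ⟨m, rfl⟩

end HasValue

variable {t : K} {p : ℕ}

theorem hasValue_geomSeries (ht : ‖t‖ < 1) (hp : p ≠ 0) :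
    HasValue (geomSeries ℤ p hp) t (1 - t ^ p)⁻¹ := by
  refine HasValue.expand hp ?_
  simpa [HasValue] using
    hasSum_geometric_of_norm_lt_one (norm_pow t p ▸ pow_lt_one₀ (norm_nonneg t) ht hp)

theorem hasValue_polynomial_mul_geomSeries (ht : ‖t‖ < 1) (hp : p ≠ 0) (P : ℤ[X]) :
    HasValue ((P : ℤ⟦X⟧) * geomSeries ℤ p hp) t (aeval t P * (1 - t ^ p)⁻¹) :=
  (hasValue_geomSeries ht hp).polynomial_mul P

theorem EventuallyPeriodic.exists_hasValue (ht : ‖t‖ < 1) (hp : p ≠ 0) {a : ℤ⟦X⟧}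
    (ha : EventuallyPeriodic p (PowerSeries.coeff · a)) :
    ∃ P : ℤ[X], HasValue a t (aeval t P * (1 - t ^ p)⁻¹) := by
  obtain ⟨P, rfl⟩ := (eventuallyPeriodic_coeff_iff hp).1 ha
  exact ⟨P, hasValue_polynomial_mul_geomSeries ht hp P⟩

end HasValue

/-! ### Digit reduction -/

section DigitReduction

theorem norm_tdiv_le (m n : ℤ) : ‖m.tdiv n‖ ≤ ‖m‖ / ‖n‖ := by
  simp only [Int.norm_eq_abs, ← Int.cast_abs, ← Nat.cast_natAbs, Int.natAbs_tdiv]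
  exact Nat.cast_div_le

theorem norm_sub_mul_tdiv_lt (m : ℤ) {n : ℤ} (hn : n ≠ 0) : ‖m - n * m.tdiv n‖ < ‖n‖ := by
  simp only [← Int.tmod_def, Int.norm_eq_abs, ← Int.cast_abs, ← Nat.cast_natAbs, Int.natAbs_tmod]
  exact Nat.cast_lt.2 (Nat.mod_lt _ (Int.natAbs_pos.2 hn))

theorem norm_coeff_X_pow_mul_lt {R : Type*} [SeminormedRing R] (N : ℕ) {a : R⟦X⟧} {M : ℝ}
    (ha : ∀ k, ‖PowerSeries.coeff k a‖ < M) (k : ℕ) :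
    ‖PowerSeries.coeff k (PowerSeries.X ^ N * a)‖ < M := by
  rw [PowerSeries.coeff_X_pow_mul']
  split_ifs
  · exact ha _
  · simpa using (norm_nonneg _).trans_lt (ha 0)

variable {K : Type*} [NormedField K] {t y : K} {g : ℤ[X]} {N p : ℕ} {a : ℤ⟦X⟧}

/-- Subtracting the multiple `g * q` of the relation `g(t) = 0`, where `q` consists of the quotients
of the digits by the `N`-th coefficient of `g`, leaves the remainders and the carries produced by
the other coefficients of `g`. -/
theorem exists_hasValue_norm_coeff_lt (hB : g.coeff N ≠ 0) (hg : aeval t g = 0) (ht : ‖t‖ < 1)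
    (hp : p ≠ 0) (ha : EventuallyPeriodic p (PowerSeries.coeff · a)) (hy : HasValue a t y) {M : ℝ}
    (hM : ∀ k, ‖PowerSeries.coeff k a‖ ≤ M) :
    ∃ b : ℤ⟦X⟧, EventuallyPeriodic p (PowerSeries.coeff · b) ∧ HasValue b t (t ^ N * y) ∧
      ∀ k, ‖PowerSeries.coeff k b‖ <
        ‖g.coeff N‖ + l1Norm (g.erase N) * (M / ‖g.coeff N‖) := by
  set B := g.coeff N
  let q : ℤ⟦X⟧ := PowerSeries.mk fun k ↦ (PowerSeries.coeff k a).tdiv B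
  have hq : EventuallyPeriodic p (PowerSeries.coeff · q) := by
    simpa only [q, PowerSeries.coeff_mk] using ha.comp (Int.tdiv · B)
  have hqM (k : ℕ) : ‖PowerSeries.coeff k q‖ ≤ M / ‖B‖ := by
    rw [PowerSeries.coeff_mk]
    exact (norm_tdiv_le _ B).trans (by gcongr; exact hM k)
  have hrem (k : ℕ) : ‖PowerSeries.coeff k (a - PowerSeries.C B * q)‖ < ‖B‖ := by
    rw [map_sub, PowerSeries.coeff_C_mul, PowerSeries.coeff_mk]
    exact norm_sub_mul_tdiv_lt _ hB
  have hb : ((X ^ N : ℤ[X]) : ℤ⟦X⟧) * a - (g : ℤ⟦X⟧) * q =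
      PowerSeries.X ^ N * (a - PowerSeries.C B * q) - (g.erase N : ℤ⟦X⟧) * q := by
    nth_rw 1 [← monomial_add_erase g N]
    rw [coe_add, ← C_mul_X_pow_eq_monomial, coe_mul, coe_pow, coe_X, coe_C]
    ring
  refine ⟨((X ^ N : ℤ[X]) : ℤ⟦X⟧) * a - (g : ℤ⟦X⟧) * q, ?_, ?_, fun k ↦ ?_⟩
  · simpa only [map_sub] using
      (ha.coeff_polynomial_mul hp (X ^ N)).sub (hq.coeff_polynomial_mul hp g)
  · obtain ⟨P, hP⟩ := hq.exists_hasValue ht hp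
    simpa [hg] using (hy.polynomial_mul (X ^ N)).sub (hP.polynomial_mul g)
  · rw [hb, map_sub]
    have hlt := norm_coeff_X_pow_mul_lt N hrem k
    have hle := norm_coeff_polynomial_mul_le (g.erase N) hqM k
    exact (norm_sub_le _ _).trans_lt <| add_lt_add_of_lt_of_le hlt hle

theorem exists_hasValue_norm_coeff_le_of_isDominantCoeff (hdom : IsDominantCoeff g N)
    (hg : aeval t g = 0) (ht : ‖t‖ < 1) :
    ∃ M : ℕ, ∀ {a : ℤ⟦X⟧} {p : ℕ} {y : K}, p ≠ 0 → EventuallyPeriodic p (PowerSeries.coeff · a) →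
      HasValue a t y → ∃ (b : ℤ⟦X⟧) (L : ℕ), EventuallyPeriodic p (PowerSeries.coeff · b) ∧
        HasValue b t (t ^ L * y) ∧ ∀ k, ‖PowerSeries.coeff k b‖ ≤ M := by
  set B := g.coeff N
  set S := l1Norm (g.erase N)
  have hSB : S < ‖B‖ := hdom.l1Norm_erase_lt
  have hBpos : 0 < ‖B‖ := (l1Norm_nonneg _).trans_lt hSB
  obtain ⟨M₀, hM₀⟩ := exists_nat_ge (‖B‖ ^ 2 / (‖B‖ - S))
  have hcarry {M : ℕ} (hM : M₀ ≤ M) : ‖B‖ + S * (M / ‖B‖) ≤ M := by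
    have : ‖B‖ ^ 2 ≤ M * (‖B‖ - S) :=
      (div_le_iff₀ (sub_pos.2 hSB)).1 (hM₀.trans (Nat.cast_le.2 hM))
    rw [← mul_le_mul_iff_left₀ hBpos, add_mul, mul_assoc, div_mul_cancel₀ _ hBpos.ne']
    linarith
  refine ⟨M₀, fun {a p y} hp ha hy ↦ ?_⟩
  obtain ⟨M, hM⟩ : ∃ M : ℕ, ∀ k, ‖PowerSeries.coeff k a‖ ≤ M :=
    (ha.exists_norm_coeff_le hp).elim fun r hr ↦
      (exists_nat_ge r).imp fun M hM k ↦ (hr k).trans hM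
  induction M generalizing a y with
  | zero => exact ⟨a, 0, ha, by simpa using hy, fun k ↦ (hM k).trans (by gcongr; exact M₀.zero_le)⟩
  | succ M ih =>
    rcases lt_or_ge M M₀ with hlt | hge
    · exact ⟨a, 0, ha, by simpa using hy, fun k ↦ (hM k).trans (by gcongr; exact hlt)⟩
    · obtain ⟨a', ha', hy', hM'⟩ :=
        exists_hasValue_norm_coeff_lt (norm_pos_iff.1 hBpos) hg ht hp ha hy hM
      obtain ⟨b, L, hb, hyb, hbM⟩ := ih ha' hy' fun k ↦ by
        have := (hM' k).trans_le (hcarry (hge.trans M.le_succ))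
        rw [Int.norm_eq_abs] at this ⊢
        exact_mod_cast Order.lt_add_one_iff.1 (by exact_mod_cast this)
      exact ⟨b, L + N, hb, by rwa [pow_add, mul_assoc], hbM⟩

end DigitReduction

/-! ### Eventually periodic representations -/

section PerSet

variable {K : Type*} [NormedField K] {β x : K}

/-- `Per_A(β)`: the elements with an eventually periodic representation in base `β` with digits
in `A`, the leading digit having weight `β ^ L`. It is meant for `1 < ‖β‖`, where these series
converge; otherwise the sum may be the junk value `0`. -/
def perSet (A : Set ℤ) (β : K) : Set K :=
  {x | ∃ (L : ℤ) (a : ℕ → ℤ), (∀ k, a k ∈ A) ∧ (∃ N p : ℕ, 1 ≤ p ∧ ∀ k, N ≤ k → a (k + p) = a k) ∧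
    x = ∑' k : ℕ, (a k : K) * β ^ (L - (k : ℤ))}

theorem mem_perSet_iff (hβ : 1 < ‖β‖) {A : Set ℤ} :
    x ∈ perSet A β ↔ ∃ (L : ℤ) (a : ℤ⟦X⟧) (p : ℕ) (y : K), (∀ k, PowerSeries.coeff k a ∈ A) ∧
      p ≠ 0 ∧ EventuallyPeriodic p (PowerSeries.coeff · a) ∧ HasValue a β⁻¹ y ∧ x = β ^ L * y := by
  have hβ0 : β ≠ 0 := norm_pos_iff.1 (one_pos.trans hβ)
  have hsum (L : ℤ) (a : ℕ → ℤ) :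
      ∑' k : ℕ, (a k : K) * β ^ (L - (k : ℤ)) = β ^ L * ∑' k : ℕ, (a k : K) * β⁻¹ ^ k := by
    rw [← tsum_mul_left]
    refine tsum_congr fun k ↦ ?_
    rw [zpow_sub₀ hβ0, zpow_natCast, inv_pow, div_eq_mul_inv, mul_left_comm]
  constructor
  · rintro ⟨L, a, hA, ⟨N, p, hp, ha⟩, rfl⟩
    have hp0 : p ≠ 0 := by omega
    have hper : EventuallyPeriodic p (PowerSeries.coeff · (PowerSeries.mk a)) := by
      simpa only [PowerSeries.coeff_mk] using! eventually_atTop.2 ⟨N, ha⟩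
    obtain ⟨P, hP⟩ := hper.exists_hasValue (norm_inv β ▸ inv_lt_one_of_one_lt₀ hβ) hp0
    refine ⟨L, PowerSeries.mk a, p, _, by simpa, hp0, hper, hP, ?_⟩
    rw [hsum, ← hP.tsum_eq]
    simp only [PowerSeries.coeff_mk]
  · rintro ⟨L, a, p, y, hA, hp, ha, hy, rfl⟩
    obtain ⟨N, hN⟩ := eventually_atTop.1 ha
    exact ⟨L, _, hA, ⟨N, p, by omega, hN⟩, by rw [hsum, hy.tsum_eq]⟩

theorem perSet_subset_closure (hβ : 1 < ‖β‖) (A : Set ℤ) :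
    perSet A β ⊆ Subfield.closure {β} := by
  intro x hx
  obtain ⟨L, a, p, y, -, hp, ha, hy, rfl⟩ := (mem_perSet_iff hβ).1 hx
  have hβmem : β ∈ Subfield.closure {β} := Subfield.subset_closure rfl
  obtain ⟨P, hP⟩ := ha.exists_hasValue (norm_inv β ▸ inv_lt_one_of_one_lt₀ hβ) hp
  rw [hy.unique hP]
  have hPmem : aeval β⁻¹ P ∈ Subfield.closure {β} := by
    rw [aeval_eq_sum_range]
    exact sum_mem fun i _ ↦ zsmul_mem (pow_mem (inv_mem hβmem) i) _
  exact mul_mem (zpow_mem hβmem L)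
    (mul_mem hPmem (inv_mem (sub_mem (one_mem _) (pow_mem (inv_mem hβmem) p))))

theorem exists_hasValue_of_mem_closure [CharZero K] {t : K} (htalg : IsAlgebraic ℚ t)
    (ht : ‖t‖ < 1) (hx : x ∈ Subfield.closure {t}) :
    ∃ (a : ℤ⟦X⟧) (p i : ℕ), p ≠ 0 ∧ EventuallyPeriodic p (PowerSeries.coeff · a) ∧
      HasValue a t (t ^ i * x) := by
  obtain ⟨i, p, hp, P, hP⟩ := exists_pow_mul_one_sub_pow_mul_eq_aeval htalg hx
  have hne : 1 - t ^ p ≠ 0 := sub_ne_zero.2 fun h ↦ by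
    have := pow_lt_one₀ (norm_nonneg t) ht hp.ne'
    rw [← norm_pow, ← h, norm_one] at this
    exact this.false
  refine ⟨P * geomSeries ℤ p hp.ne', p, i, hp.ne',
    (eventuallyPeriodic_coeff_iff hp.ne').2 ⟨P, rfl⟩, ?_⟩
  convert hasValue_polynomial_mul_geomSeries ht hp.ne' P using 1
  rw [← hP]
  field_simp

theorem stmt_9_general [CharZero K] (β : K) (hβalg : IsAlgebraic ℚ β) (hβ : 1 < ‖β‖)
    (hconj : ∀ z : ℂ, aeval z (minpoly ℚ β) = 0 → ‖z‖ ≠ 1) :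
    ∃ A : Finset ℤ, perSet A β = Subfield.closure {β} := by
  have hβ0 : β ≠ 0 := norm_pos_iff.1 (one_pos.trans hβ)
  have ht : ‖β⁻¹‖ < 1 := norm_inv β ▸ inv_lt_one_of_one_lt₀ hβ
  obtain ⟨g, N, hdom, hg⟩ := exists_isDominantCoeff_aeval_inv_eq_zero hβalg hconj
  obtain ⟨M, hM⟩ := exists_hasValue_norm_coeff_le_of_isDominantCoeff hdom hg ht
  refine ⟨Finset.Icc (-M) M, (perSet_subset_closure hβ _).antisymm fun x hx ↦ ?_⟩
  have hle : Subfield.closure {β} ≤ Subfield.closure {β⁻¹} := by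
    simpa [Subfield.closure_le] using inv_mem (Subfield.subset_closure (Set.mem_singleton β⁻¹))
  obtain ⟨a, p, i, hp, ha, hval⟩ :=
    exists_hasValue_of_mem_closure hβalg.inv ht (hle hx)
  obtain ⟨b, L, hb, hbval, hbM⟩ := hM hp ha hval
  refine (mem_perSet_iff hβ).2 ⟨L + i, b, p, _, fun k ↦ ?_, hp, hb, hbval, ?_⟩
  · rw [Finset.coe_Icc, Set.mem_Icc, ← abs_le]
    exact_mod_cast Int.norm_eq_abs (PowerSeries.coeff k b) ▸ hbM k
  · rw [← mul_assoc (β⁻¹ ^ L), ← pow_add, inv_pow, ← Nat.cast_add, zpow_natCast,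
      mul_inv_cancel_left₀ (pow_ne_zero _ hβ0)]

end PerSet

/-- Kala–Vávra theorem: for an algebraic number `β` with `|β| > 1` and no
Galois conjugate of modulus `1`, there is a finite alphabet `A ⊂ ℤ` with
`ℚ(β) = Per_A(β)`. -/
theorem stmt_9
    (β : ℂ) (hβalg : IsAlgebraic ℚ β) (hβ : 1 < ‖β‖)
    (hconj : ∀ z : ℂ, Polynomial.aeval z (minpoly ℚ β) = 0 → ‖z‖ ≠ 1) :
    ∃ A : Finset ℤ,
      ∀ x : ℂ,
        x ∈ Subfield.closure ({β} : Set ℂ) ↔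
        ∃ (L : ℤ) (a : ℕ → ℤ),
          (∀ k, a k ∈ A) ∧
          (∃ N p : ℕ, 1 ≤ p ∧ ∀ k, N ≤ k → a (k + p) = a k) ∧
          x = ∑' k : ℕ, (a k : ℂ) * β ^ (L - (k : ℤ)) := by
  obtain ⟨A, hA⟩ := stmt_9_general β hβalg hβ hconj
  exact ⟨A, fun x ↦ (Set.ext_iff.1 hA x).symm⟩
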